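/- arXiv:1904.06223 — 2 statements merged into one kernel-verified Lean document; each statement's English description precedes it below -/
import Mathlib

section
/- Let α > -1 and 0 < p < ∞ with p = α + 2. Then the norm of the point evaluation functional δ_z on the weighted Dirichlet space D^p_α satisfies ‖δ_z‖ ≍ (log(2/(1-|z|²)))^{(p-1)/p}, i.e., there exist constants c, C > 0 independent of z ∈ 𝔻 such that c·(log(2/(1-|z|²)))^{(p-1)/p} ≤ sup{|f(z)| : f ∈ D^p_α, ‖f‖_{D^p_α} ≤ 1} ≤ C·(log(2/(1-|z|²)))^{(p-1)/p} for all z ∈ 𝔻. -/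
open MeasureTheory Metric Set Filter Topology ENNReal

noncomputable section

/-- The open unit disk in ℂ. -/
def unitDisk : Set ℂ := Metric.ball (0 : ℂ) 1

/-- The normalized Lebesgue area measure `dA = (1/π) dx dy` on ℂ. -/
def areaMeasure : Measure ℂ := (ENNReal.ofReal (Real.pi)⁻¹) • (volume : Measure ℂ)

/-- `∫_𝔻 |f'(z)|^p (1-|z|²)^α dA(z)`, as an extended nonnegative real. -/
def dirichletLintegral (p α : ℝ) (f : ℂ → ℂ) : ℝ≥0∞ :=
  ∫⁻ z in unitDisk, ENNReal.ofReal (‖deriv f z‖ ^ p * (1 - ‖z‖ ^ 2) ^ α) ∂areaMeasure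

/-- Membership in the weighted Dirichlet space `D^p_α`: analytic on 𝔻 with finite norm. -/
def MemDirichlet (p α : ℝ) (f : ℂ → ℂ) : Prop :=
  DifferentiableOn ℂ f unitDisk ∧ dirichletLintegral p α f < ⊤

/-- The norm of the weighted Dirichlet space `D^p_α`:
`(|f(0)|^p + ∫_𝔻 |f'(z)|^p (1-|z|²)^α dA(z))^{1/p}`. -/
def dirichletNorm (p α : ℝ) (f : ℂ → ℂ) : ℝ :=
  (‖f 0‖ ^ p + (dirichletLintegral p α f).toReal) ^ (1 / p)

lemma aux_polar (h : ℂ → ℝ≥0∞) (hh : Measurable h) :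
    ∫⁻ w, h w = ∫⁻ s in Ioi (0:ℝ), ENNReal.ofReal s *
      ∫⁻ θ in Ioo (-Real.pi) Real.pi, h (circleMap 0 s θ) := by
  rw [← Complex.lintegral_comp_polarCoord_symm]
  have e : polarCoord.target = Ioi (0:ℝ) ×ˢ Ioo (-Real.pi) Real.pi := rfl
  have e2 : ∀ q : ℝ × ℝ, Complex.polarCoord.symm q = circleMap 0 q.1 q.2 := by
    intro q
    simp [circleMap, Complex.exp_mul_I]
  have hc : Measurable (fun q : ℝ × ℝ => circleMap 0 q.1 q.2) := by
    unfold circleMap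
    fun_prop
  simp_rw [e2, smul_eq_mul]
  rw [e, Measure.volume_eq_prod, ← Measure.prod_restrict, lintegral_prod]
  · refine lintegral_congr fun s => ?_
    dsimp only
    rw [lintegral_const_mul]
    exact hh.comp (hc.comp measurable_prodMk_left)
  · exact ((ENNReal.measurable_ofReal.comp measurable_fst).mul (hh.comp hc)).aemeasurable

lemma aux_circle (g : ℂ → ℂ) (c : ℂ) (R s : ℝ) (hs : 0 < s) (hsR : s < R)
    (hg : DifferentiableOn ℂ g (ball c R)) :
    ENNReal.ofReal (2 * Real.pi) * ‖g c‖ₑ ≤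
      ∫⁻ θ in Ioo (-Real.pi) Real.pi, ‖g (c + circleMap 0 s θ)‖ₑ := by
  have hd : DiffContOnCl ℂ g (ball c |s|) := by
    apply DifferentiableOn.diffContOnCl
    apply hg.mono
    rw [abs_of_pos hs, closure_ball c hs.ne']
    exact closedBall_subset_ball hsR
  have h1 := hd.circleAverage
  rw [Real.circleAverage_eq_integral_add (-Real.pi),
    intervalIntegral.integral_comp_add_right (fun θ ↦ g (circleMap c s θ))] at h1
  have h2 : (0 + -Real.pi) = -Real.pi := by ring
  have h3 : (2 * Real.pi + -Real.pi) = Real.pi := by ring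
  rw [h2, h3, intervalIntegral.integral_of_le (by linarith [Real.pi_pos]),
    integral_Ioc_eq_integral_Ioo] at h1
  have h4 : (2 * Real.pi) • g c = ∫ θ in Ioo (-Real.pi) Real.pi, g (circleMap c s θ) := by
    rw [← h1, smul_smul, mul_inv_cancel₀ (by positivity), one_smul]
  calc ENNReal.ofReal (2 * Real.pi) * ‖g c‖ₑ = ‖(2 * Real.pi) • g c‖ₑ := by
        rw [enorm_smul, Real.enorm_eq_ofReal (by positivity)]
    _ ≤ _ := by
        rw [h4]
        refine (enorm_integral_le_lintegral_enorm _).trans (le_of_eq ?_)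
        simp [circleMap]

lemma aux_area (g : ℂ → ℂ) (hm : Measurable g) (c : ℂ) (R : ℝ) (hR : 0 < R)
    (hg : DifferentiableOn ℂ g (ball c R)) :
    ENNReal.ofReal (Real.pi * R ^ 2) * ‖g c‖ₑ ≤ ∫⁻ w in ball c R, ‖g w‖ₑ := by
  have e1 : ∫⁻ w in ball c R, ‖g w‖ₑ = ∫⁻ w, (ball (0:ℂ) R).indicator (fun w => ‖g (c + w)‖ₑ) w := by
    rw [← lintegral_indicator measurableSet_ball]
    rw [← lintegral_add_left_eq_self _ c]
    refine lintegral_congr fun w => ?_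
    by_cases hw : ‖w‖ < R <;> simp [indicator, hw]
  rw [e1, aux_polar _ (by
    refine Measurable.indicator ?_ measurableSet_ball
    exact (hm.comp (measurable_const_add c)).enorm)]
  calc ENNReal.ofReal (Real.pi * R ^ 2) * ‖g c‖ₑ
      = (∫⁻ s in Ioo 0 R, ENNReal.ofReal s) * (ENNReal.ofReal (2 * Real.pi) * ‖g c‖ₑ) := by
        rw [← ofReal_integral_eq_lintegral_ofReal]
        · rw [← integral_Ioc_eq_integral_Ioo, ← intervalIntegral.integral_of_le hR.le, integral_id,
            ← mul_assoc, ← ENNReal.ofReal_mul (by rw [zero_pow two_ne_zero, sub_zero]; positivity)]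
          congr 2
          ring
        · exact (continuous_id.integrableOn_Icc).mono_set Ioo_subset_Icc_self
        · filter_upwards [ae_restrict_mem measurableSet_Ioo] with x hx using hx.1.le
    _ = ∫⁻ s in Ioo 0 R, ENNReal.ofReal s * (ENNReal.ofReal (2 * Real.pi) * ‖g c‖ₑ) := by
        rw [lintegral_mul_const _ ENNReal.measurable_ofReal]
    _ ≤ ∫⁻ s in Ioo 0 R, ENNReal.ofReal s *
      ∫⁻ θ in Ioo (-Real.pi) Real.pi,
        (ball (0:ℂ) R).indicator (fun w => ‖g (c + w)‖ₑ) (circleMap 0 s θ) := by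
        refine setLIntegral_mono' measurableSet_Ioo fun s hs => ?_
        gcongr
        refine (aux_circle g c R s hs.1 hs.2 hg).trans (le_of_eq ?_)
        refine lintegral_congr fun θ => ?_
        rw [indicator_of_mem]
        simp [abs_of_pos hs.1, hs.2]
    _ ≤ _ := lintegral_mono_set Ioo_subset_Ioi_self

lemma aux_area_p (p : ℝ) (hp : 1 < p) (g : ℂ → ℂ) (hm : Measurable g) (c : ℂ) (R : ℝ) (hR : 0 < R)
    (hg : DifferentiableOn ℂ g (ball c R)) :
    ENNReal.ofReal (Real.pi * R ^ 2) * ‖g c‖ₑ ^ p ≤ ∫⁻ w in ball c R, ‖g w‖ₑ ^ p := by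
  have hpq : p.HolderConjugate (p / (p - 1)) := Real.HolderConjugate.conjExponent hp
  have h1 := aux_area g hm c R hR hg
  have h2 := ENNReal.lintegral_mul_le_Lp_mul_Lq (volume.restrict (ball c R)) hpq
    (f := fun w => ‖g w‖ₑ) (g := fun _ => 1) hm.enorm.aemeasurable aemeasurable_const
  have hv : volume (ball c R) = ENNReal.ofReal (Real.pi * R ^ 2) := by
    rw [Complex.volume_ball, ← ENNReal.ofReal_pow hR.le, mul_comm,
      ENNReal.ofReal_mul Real.pi_pos.le]
    congr 1
    rw [← NNReal.coe_real_pi, ENNReal.ofReal_coe_nnreal]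
  simp only [Pi.mul_apply, mul_one, ENNReal.one_rpow, lintegral_const, one_mul,
    Measure.restrict_apply_univ, hv] at h2
  set V := ENNReal.ofReal (Real.pi * R ^ 2) with hV
  have hV0 : V ≠ 0 := by
    rw [hV]; simp only [ne_eq, ENNReal.ofReal_eq_zero, not_le]; positivity
  have hVt : V ≠ ⊤ := ENNReal.ofReal_ne_top
  have h3 := ENNReal.rpow_le_rpow (h1.trans h2) (by linarith : 0 ≤ p)
  rw [ENNReal.mul_rpow_of_nonneg _ _ (by linarith), ENNReal.mul_rpow_of_nonneg _ _ (by linarith),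
    ← ENNReal.rpow_mul, ← ENNReal.rpow_mul, one_div_mul_cancel (by linarith), ENNReal.rpow_one] at h3
  have h4 : 1 / (p / (p - 1)) * p = p - 1 := by
    have : p - 1 ≠ 0 := by linarith
    field_simp
  rw [h4] at h3
  have h5 : V ^ p = V ^ (p - 1) * V := by
    conv_lhs => rw [show p = (p - 1) + 1 by ring]
    rw [ENNReal.rpow_add _ _ hV0 hVt, ENNReal.rpow_one]
  rw [h5, mul_assoc, mul_comm _ (V ^ (p - 1))] at h3
  exact (ENNReal.mul_le_mul_iff_right (by simp [hV0, hVt]) (ENNReal.rpow_ne_top_of_ne_zero hV0 hVt)).1 h3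

lemma aux_ratio (e t x : ℝ) (hx : 0 < x) (h1 : x / 3 ≤ t) (h2 : t ≤ 3 * x) :
    t ^ e ≤ 3 ^ |e| * x ^ e := by
  have ht : 0 < t := by linarith
  rcases le_or_gt 0 e with he | he
  · rw [abs_of_nonneg he, ← Real.mul_rpow (by norm_num) hx.le]
    exact Real.rpow_le_rpow ht.le h2 he
  · rw [abs_of_neg he, Real.rpow_neg (by norm_num), ← Real.inv_rpow (by norm_num),
      ← Real.mul_rpow (by norm_num) hx.le]
    exact Real.rpow_le_rpow_of_nonpos (by positivity) (by linarith) he.le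

lemma aux_carleson (p : ℝ) (hp : 1 < p) (g : ℂ → ℂ) (hm : Measurable g)
    (hg : DifferentiableOn ℂ g (ball 0 1)) (u : ℂ) (hu : ‖u‖ = 1) :
    ∫⁻ s in Ioo (0:ℝ) 1, ENNReal.ofReal ((1 - s) ^ (p - 1)) * ‖g (s * u)‖ₑ ^ p ≤
      ENNReal.ofReal (16 / (3 * Real.pi) * 3 ^ |p - 3|) *
      ∫⁻ w in ball (0:ℂ) 1, ENNReal.ofReal ((1 - ‖w‖ ^ 2) ^ (p - 2)) * ‖g w‖ₑ ^ p := by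
  set S : Set (ℝ × ℂ) := {q | ‖q.2 - q.1 * u‖ < (1 - q.1) / 2} with hS
  have hSm : MeasurableSet S := by
    apply IsOpen.measurableSet
    exact isOpen_lt (by fun_prop) (by fun_prop)
  set F : ℝ → ℂ → ℝ≥0∞ := fun s w => S.indicator
    (fun q => ENNReal.ofReal (4 / Real.pi * (1 - q.1) ^ (p - 3)) * ‖g q.2‖ₑ ^ p) (s, w) with hF
  have hFm : Measurable (Function.uncurry F) := by
    have : Function.uncurry F = S.indicator
      (fun q => ENNReal.ofReal (4 / Real.pi * (1 - q.1) ^ (p - 3)) * ‖g q.2‖ₑ ^ p) := by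
      ext ⟨s, w⟩; rfl
    rw [this]
    refine Measurable.indicator ?_ hSm
    refine Measurable.mul ?_ ?_
    · refine ENNReal.measurable_ofReal.comp ?_
      fun_prop
    · exact ((hm.comp measurable_snd).enorm).pow_const p
  calc ∫⁻ s in Ioo (0:ℝ) 1, ENNReal.ofReal ((1 - s) ^ (p - 1)) * ‖g (s * u)‖ₑ ^ p
      ≤ ∫⁻ s in Ioo (0:ℝ) 1, ∫⁻ w in ball (0:ℂ) 1, F s w := by
        refine setLIntegral_mono' measurableSet_Ioo fun s hs => ?_
        have hs1 : 0 < 1 - s := by linarith [hs.2]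
        have hsub : ball ((s:ℂ) * u) ((1 - s) / 2) ⊆ ball 0 1 := by
          apply ball_subset_ball'
          simp [hu, abs_of_pos hs.1]
          linarith
        have h1 := aux_area_p p hp g hm (s * u) ((1 - s) / 2) (by linarith) (hg.mono hsub)
        have e1 : ∫⁻ w in ball (0:ℂ) 1, F s w = ENNReal.ofReal (4 / Real.pi * (1 - s) ^ (p - 3)) *
            ∫⁻ w in ball ((s:ℂ) * u) ((1 - s) / 2), ‖g w‖ₑ ^ p := by
          rw [← lintegral_const_mul _ (hm.enorm.pow_const p)]
          have : ∀ w, F s w = (ball ((s:ℂ) * u) ((1 - s) / 2)).indicator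
             (fun w => ENNReal.ofReal (4 / Real.pi * (1 - s) ^ (p - 3)) * ‖g w‖ₑ ^ p) w := by
            intro w
            simp only [hF, hS, indicator, mem_ofPred_eq, mem_ball, dist_eq_norm]
          simp_rw [this]
          rw [lintegral_indicator measurableSet_ball, Measure.restrict_restrict measurableSet_ball,
            inter_eq_left.2 hsub]
        rw [e1]
        refine le_trans (le_of_eq ?_) (mul_le_mul_right h1 _)
        rw [← mul_assoc, ← ENNReal.ofReal_mul (by positivity)]
        congr 2
        have : (1 - s) ^ (p - 1) = (1 - s) ^ (p - 3) * (1 - s) ^ 2 := by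
          rw [← Real.rpow_natCast (1 - s) 2, ← Real.rpow_add hs1]
          congr 1
          push_cast
          ring
        rw [this]
        field_simp
        ring
    _ = ∫⁻ w in ball (0:ℂ) 1, ∫⁻ s in Ioo (0:ℝ) 1, F s w :=
        lintegral_lintegral_swap hFm.aemeasurable
    _ ≤ ∫⁻ w in ball (0:ℂ) 1, ENNReal.ofReal (16 / (3 * Real.pi) * 3 ^ |p - 3|) *
          (ENNReal.ofReal ((1 - ‖w‖ ^ 2) ^ (p - 2)) * ‖g w‖ₑ ^ p) := by
        refine setLIntegral_mono' measurableSet_ball fun w hw => ?_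
        have hw1 : ‖w‖ < 1 := by simpa using hw
        have hw0 := norm_nonneg w
        set x := 1 - ‖w‖ ^ 2 with hx
        have hx0 : 0 < x := by rw [hx]; nlinarith
        have hxd : 1 - ‖w‖ ≤ x := by rw [hx]; nlinarith
        have hxd2 : x ≤ 2 * (1 - ‖w‖) := by rw [hx]; nlinarith
        set A := ENNReal.ofReal (4 / Real.pi * (3 ^ |p - 3| * x ^ (p - 3))) * ‖g w‖ₑ ^ p with hA
        have hb : ∀ s ∈ Ioo (0:ℝ) 1, F s w ≤
            (Ioo (1 - 2 * (1 - ‖w‖)) (1 - 2 / 3 * (1 - ‖w‖))).indicator (fun _ => A) s := by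
          intro s hs
          by_cases h : ((s, w) : ℝ × ℂ) ∈ S
          · have h' : ‖w - s * u‖ < (1 - s) / 2 := h
            have hsu : ‖(s:ℂ) * u‖ = s := by simp [hu, abs_of_pos hs.1]
            have h3 := norm_sub_norm_le w (s * u)
            have h4 := norm_sub_norm_le (s * u) w
            rw [norm_sub_rev] at h4
            rw [hsu] at h3 h4
            rw [indicator_of_mem (by constructor <;> linarith)]
            simp only [hF]
            rw [indicator_of_mem h, hA]
            gcongr
            exact aux_ratio _ _ _ hx0 (by linarith) (by linarith)
          · simp [hF, h]
        calc ∫⁻ s in Ioo (0:ℝ) 1, F s w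
            ≤ ∫⁻ s in Ioo (0:ℝ) 1,
              (Ioo (1 - 2 * (1 - ‖w‖)) (1 - 2 / 3 * (1 - ‖w‖))).indicator (fun _ => A) s :=
              setLIntegral_mono' measurableSet_Ioo hb
          _ ≤ ∫⁻ s, (Ioo (1 - 2 * (1 - ‖w‖)) (1 - 2 / 3 * (1 - ‖w‖))).indicator (fun _ => A) s :=
              setLIntegral_le_lintegral _ _
          _ = A * ENNReal.ofReal (4 / 3 * (1 - ‖w‖)) := by
              rw [lintegral_indicator measurableSet_Ioo, lintegral_const,
                Measure.restrict_apply_univ, Real.volume_Ioo]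
              congr 2
              ring
          _ ≤ A * ENNReal.ofReal (4 / 3 * x) := by gcongr
          _ = _ := by
              rw [hA, mul_right_comm, ← ENNReal.ofReal_mul (by positivity),
                ← mul_assoc (ENNReal.ofReal (16 / (3 * Real.pi) * 3 ^ |p - 3|)),
                ← ENNReal.ofReal_mul (by positivity)]
              congr 2
              have : x ^ (p - 2) = x ^ (p - 3) * x := by
                conv_rhs => rw [← Real.rpow_one x, ← Real.rpow_mul hx0.le, one_mul, ← Real.rpow_add hx0]
                congr 1; ring
              rw [this]
              field_simp
              ring
    _ = _ := by
        rw [lintegral_const_mul]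
        refine Measurable.mul ?_ (hm.enorm.pow_const p)
        refine ENNReal.measurable_ofReal.comp ?_
        fun_prop

lemma aux_log (r : ℝ) (h0 : 0 ≤ r) (h1 : r < 1) :
    ∫⁻ s in Ioc (0:ℝ) r, ENNReal.ofReal ((1 - s)⁻¹) = ENNReal.ofReal (Real.log (1 / (1 - r))) := by
  have hc : ContinuousOn (fun s : ℝ => (1 - s)⁻¹) (Icc 0 r) := by
    apply ContinuousOn.inv₀ (by fun_prop)
    intro x hx
    linarith [hx.2]
  rw [← ofReal_integral_eq_lintegral_ofReal]
  · rw [← intervalIntegral.integral_of_le h0,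
      intervalIntegral.integral_comp_sub_left (fun x => x⁻¹) 1, integral_inv_of_pos (by linarith) (by linarith)]
    simp
  · exact (hc.integrableOn_Icc).mono_set Ioc_subset_Icc_self
  · filter_upwards [ae_restrict_mem measurableSet_Ioc] with x hx
    have : 0 < 1 - x := by linarith [hx.2]
    simp only [Pi.zero_apply]; positivity

lemma aux_radial (p : ℝ) (hp : 1 < p) (f : ℂ → ℂ)
    (hf : DifferentiableOn ℂ f (ball 0 1)) (u : ℂ) (hu : ‖u‖ = 1) (r : ℝ) (h0 : 0 ≤ r) (h1 : r < 1) :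
    ‖f (r * u) - f 0‖ₑ ≤
    (∫⁻ s in Ioo (0:ℝ) 1, ENNReal.ofReal ((1 - s) ^ (p - 1)) * ‖deriv f (s * u)‖ₑ ^ p) ^ (1 / p) *
      ENNReal.ofReal (Real.log (1 / (1 - r))) ^ ((p - 1) / p) := by
  have hpq : p.HolderConjugate (p / (p - 1)) := Real.HolderConjugate.conjExponent hp
  have hmem : ∀ s ∈ Icc (0:ℝ) r, (s:ℂ) * u ∈ ball (0:ℂ) 1 := by
    intro s hs
    simp [hu, abs_of_nonneg hs.1]
    linarith [hs.2]
  have hder : ∀ s ∈ uIcc (0:ℝ) r, HasDerivAt (fun s : ℝ => f (s * u)) (deriv f (s * u) * u) s := by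
    intro s hs
    rw [uIcc_of_le h0] at hs
    have h2 := (hf.differentiableAt (isOpen_ball.mem_nhds (hmem s hs))).hasDerivAt
    have h3 : HasDerivAt (fun s : ℝ => (s:ℂ) * u) (1 * u) s :=
      (Complex.ofRealCLM.hasDerivAt (x := s)).mul_const u
    rw [one_mul] at h3
    exact HasDerivAt.comp s h2 h3
  have hcd : ContinuousOn (deriv f) (ball 0 1) := (hf.deriv isOpen_ball).continuousOn
  have hco : ContinuousOn (fun s : ℝ => deriv f (s * u) * u) (uIcc 0 r) := by
    rw [uIcc_of_le h0]
    refine ContinuousOn.mul (hcd.comp (by fun_prop) hmem) continuousOn_const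
  have hF := intervalIntegral.integral_eq_sub_of_hasDerivAt hder hco.intervalIntegrable
  simp only [Complex.ofReal_zero, zero_mul] at hF
  rw [← hF, intervalIntegral.integral_of_le h0]
  have hmeas : Measurable (fun s : ℝ => deriv f (s * u)) :=
    (measurable_deriv f).comp (by fun_prop)
  have hq : (p - 1) / p = 1 / (p / (p - 1)) := by
    rw [one_div_div]
  have hp0 : 0 < p := by linarith
  have hp1 : p - 1 ≠ 0 := by linarith
  calc _ ≤ ∫⁻ s in Ioc 0 r, ‖deriv f (s * u) * u‖ₑ := enorm_integral_le_lintegral_enorm _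
    _ = ∫⁻ s in Ioc 0 r, ((fun s : ℝ => ENNReal.ofReal ((1 - s) ^ ((p - 1) / p)) * ‖deriv f (s * u)‖ₑ) *
          (fun s : ℝ => ENNReal.ofReal ((1 - s) ^ (-((p - 1) / p))))) s := by
        refine setLIntegral_congr_fun measurableSet_Ioc fun s hs => ?_
        have hs1 : 0 < 1 - s := by linarith [hs.2]
        have hu' : ‖u‖ₑ = 1 := by rw [← ofReal_norm, hu]; simp
        simp only [Pi.mul_apply, enorm_mul, hu', mul_one]
        rw [mul_right_comm, ← ENNReal.ofReal_mul (by positivity), ← Real.rpow_add hs1]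
        simp
    _ ≤ _ := ENNReal.lintegral_mul_le_Lp_mul_Lq _ hpq
        ((ENNReal.measurable_ofReal.comp (by fun_prop)).mul hmeas.enorm).aemeasurable
        (ENNReal.measurable_ofReal.comp (by fun_prop)).aemeasurable
    _ ≤ _ := by
        rw [← hq]
        have hq0 : 0 ≤ (p - 1) / p := div_nonneg (by linarith) hp0.le
        refine mul_le_mul' (ENNReal.rpow_le_rpow ?_ (by positivity)) (ENNReal.rpow_le_rpow ?_ hq0)
        · calc _ = ∫⁻ s in Ioc 0 r, ENNReal.ofReal ((1 - s) ^ (p - 1)) * ‖deriv f (s * u)‖ₑ ^ p := by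
                refine setLIntegral_congr_fun measurableSet_Ioc fun s hs => ?_
                have hs1 : 0 < 1 - s := by linarith [hs.2]
                rw [ENNReal.mul_rpow_of_nonneg _ _ hp0.le, ENNReal.ofReal_rpow_of_nonneg (by positivity) hp0.le,
                  ← Real.rpow_mul hs1.le, div_mul_cancel₀ _ hp0.ne']
            _ ≤ _ := lintegral_mono_set (show Ioc 0 r ⊆ Ioo 0 1 from fun s hs => ⟨hs.1, lt_of_le_of_lt hs.2 h1⟩)
        · rw [← aux_log r h0 h1]
          refine le_of_eq (setLIntegral_congr_fun measurableSet_Ioc fun s hs => ?_)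
          have hs1 : 0 < 1 - s := by linarith [hs.2]
          rw [ENNReal.ofReal_rpow_of_nonneg (by positivity) (div_nonneg hp0.le (by linarith)), ← Real.rpow_mul hs1.le]
          have : -((p - 1) / p) * (p / (p - 1)) = -1 := by field_simp
          rw [this, Real.rpow_neg_one]

lemma aux_kernel (ρ θ : ℝ) (h0 : 0 ≤ ρ) (h1 : ρ < 1) (hθ : θ ∈ Ioo (-Real.pi) Real.pi) :
    1 - ρ + |θ| ≤ 2 * Real.pi * ‖1 - circleMap 0 ρ θ‖ := by
  set N := ‖1 - circleMap 0 ρ θ‖ with hN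
  have hpi := Real.pi_gt_three
  have e0 : ‖circleMap 0 ρ θ‖ = ρ := by simp [abs_of_nonneg h0]
  have hN1 : 1 - ρ ≤ N := by
    have := norm_sub_norm_le (1:ℂ) (circleMap 0 ρ θ)
    rw [e0, norm_one] at this
    exact this
  have e1 : ‖Complex.exp (Complex.I * θ) - 1‖ ≤ N + (1 - ρ) := by
    have h2 : Complex.exp (Complex.I * θ) - 1 =
        (1 - ρ : ℝ) * Complex.exp (Complex.I * θ) - (1 - circleMap 0 ρ θ) := by
      simp only [circleMap, mul_comm Complex.I]
      push_cast
      ring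
    rw [h2]
    refine (norm_sub_le _ _).trans ?_
    rw [norm_mul, mul_comm Complex.I, Complex.norm_exp_ofReal_mul_I, Complex.norm_real, Real.norm_eq_abs,
      abs_of_pos (by linarith)]
    linarith
  rw [Complex.norm_exp_I_mul_ofReal_sub_one, Real.norm_eq_abs, abs_mul, abs_two] at e1
  have e2 : 2 / Real.pi * |θ / 2| ≤ |Real.sin (θ / 2)| := by
    apply Real.mul_abs_le_abs_sin
    rw [abs_div, abs_two]
    have := abs_lt.2 hθ
    linarith
  rw [abs_div, abs_two] at e2
  have e3 : |θ| = Real.pi * (2 / Real.pi * (|θ| / 2)) := by field_simp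
  have e4 : |θ| ≤ Real.pi * N := by
    rw [e3]
    gcongr
    linarith
  nlinarith [norm_nonneg (1 - circleMap 0 ρ θ)]

lemma aux_theta (p : ℝ) (hp : 1 < p) (δ : ℝ) (hδ : 0 < δ) :
    ∫⁻ θ in Ioo (-Real.pi) Real.pi, ENNReal.ofReal ((δ + |θ|) ^ (-p)) ≤
      ENNReal.ofReal (2 / (p - 1) * δ ^ (1 - p)) := by
  set φ : ℝ → ℝ≥0∞ := (Ici δ).indicator (fun t => ENNReal.ofReal (t ^ (-p))) with hφ
  have hφm : Measurable φ := by
    refine Measurable.indicator (ENNReal.measurable_ofReal.comp ?_) measurableSet_Ici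
    fun_prop
  have hI : ∫⁻ t, φ t = ENNReal.ofReal (1 / (p - 1) * δ ^ (1 - p)) := by
    rw [hφ, lintegral_indicator measurableSet_Ici, setLIntegral_congr Ioi_ae_eq_Ici.symm,
      ← ofReal_integral_eq_lintegral_ofReal (integrableOn_Ioi_rpow_of_lt (by linarith) hδ),
      integral_Ioi_rpow_of_lt (by linarith) hδ]
    · congr 1
      rw [show -p + 1 = 1 - p by ring, show (1 - p) = -(p - 1) by ring]
      have : p - 1 ≠ 0 := by linarith
      rw [neg_div_neg_eq]
      ring
    · filter_upwards [ae_restrict_mem measurableSet_Ioi] with x hx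
      have : 0 < x := hδ.trans hx
      simp only [Pi.zero_apply]; positivity
  calc _ ≤ ∫⁻ θ, ENNReal.ofReal ((δ + |θ|) ^ (-p)) := setLIntegral_le_lintegral _ _
    _ ≤ ∫⁻ θ, (φ (θ + δ) + φ (δ - θ)) := by
        refine lintegral_mono fun θ => ?_
        rcases le_total 0 θ with h | h
        · refine le_trans (le_of_eq ?_) le_self_add
          rw [hφ, indicator_of_mem (by simpa using h), abs_of_nonneg h, add_comm]
        · refine le_trans (le_of_eq ?_) le_add_self
          rw [hφ, indicator_of_mem (by simpa using h), abs_of_nonpos h, sub_eq_add_neg]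
    _ = (∫⁻ t, φ t) + ∫⁻ t, φ t := by
        rw [lintegral_add_left (by fun_prop), lintegral_add_right_eq_self,
          lintegral_sub_left_eq_self]
    _ = _ := by
        have : 0 < p - 1 := by linarith
        rw [hI, ← ENNReal.ofReal_add (by positivity) (by positivity)]
        congr 1
        ring

lemma aux_s (p : ℝ) (hp : 1 < p) (r : ℝ) (h0 : 0 ≤ r) (h1 : r < 1) :
    ∫⁻ s in Ioo (0:ℝ) 1, ENNReal.ofReal ((1 - s) ^ (p - 2) * (1 - r * s) ^ (1 - p)) ≤
      ENNReal.ofReal (Real.log (1 / (1 - r)) + 1 / (p - 1)) := by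
  have hp1 : 0 < p - 1 := by linarith
  have hr1 : 0 < 1 - r := by linarith
  have hsub : Ioo (0:ℝ) 1 ⊆ Ioc 0 r ∪ Ioo r 1 := by
    intro s hs
    rcases le_or_gt s r with h | h
    · exact Or.inl ⟨hs.1, h⟩
    · exact Or.inr ⟨h, hs.2⟩
  have hl : 0 ≤ Real.log (1 / (1 - r)) := by
    apply Real.log_nonneg
    rw [le_div_iff₀ hr1]; linarith
  refine (lintegral_mono_set hsub).trans ((lintegral_union_le _ _ _).trans ?_)
  rw [ENNReal.ofReal_add hl (by positivity)]
  gcongr ?_ + ?_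
  · rw [← aux_log r h0 h1]
    refine setLIntegral_mono' measurableSet_Ioc fun s hs => ?_
    have hs1 : 0 < 1 - s := by linarith [hs.2]
    apply ENNReal.ofReal_le_ofReal
    calc (1 - s) ^ (p - 2) * (1 - r * s) ^ (1 - p) ≤ (1 - s) ^ (p - 2) * (1 - s) ^ (1 - p) := by
          gcongr ?_ * ?_
          exact Real.rpow_le_rpow_of_nonpos hs1 (by nlinarith [hs.1]) (by linarith)
      _ = (1 - s)⁻¹ := by
          rw [← Real.rpow_add hs1, ← Real.rpow_neg_one]
          congr 1; ring
  · have hint : IntervalIntegrable (fun s : ℝ => (1 - s) ^ (p - 2)) volume r 1 := by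
      have := (intervalIntegral.intervalIntegrable_rpow' (a := 1 - r) (b := 0)
        (by linarith : -1 < p - 2)).comp_sub_left 1
      simpa using this
    calc ∫⁻ s in Ioo r 1, ENNReal.ofReal ((1 - s) ^ (p - 2) * (1 - r * s) ^ (1 - p))
        ≤ ∫⁻ s in Ioo r 1, ENNReal.ofReal ((1 - r) ^ (1 - p)) * ENNReal.ofReal ((1 - s) ^ (p - 2)) := by
          refine setLIntegral_mono' measurableSet_Ioo fun s hs => ?_
          have hs1 : 0 < 1 - s := by linarith [hs.2]
          rw [← ENNReal.ofReal_mul (by positivity), mul_comm]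
          apply ENNReal.ofReal_le_ofReal
          gcongr ?_ * ?_
          exact Real.rpow_le_rpow_of_nonpos hr1 (by nlinarith [hs.1]) (by linarith)
      _ = _ := by
          rw [lintegral_const_mul _ (by fun_prop),
            ← ofReal_integral_eq_lintegral_ofReal]
          · rw [← integral_Ioc_eq_integral_Ioo, ← intervalIntegral.integral_of_le h1.le,
              intervalIntegral.integral_comp_sub_left (fun x => x ^ (p - 2)) 1,
              integral_rpow (Or.inl (by linarith)), ← ENNReal.ofReal_mul (by positivity)]
            congr 1
            rw [sub_self, show p - 2 + 1 = p - 1 by ring, Real.zero_rpow hp1.ne', sub_zero, mul_div_assoc',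
              ← Real.rpow_add hr1]
            simp
          · exact (intervalIntegrable_iff_integrableOn_Ioo_of_le h1.le).1 hint
          · filter_upwards [ae_restrict_mem measurableSet_Ioo] with s hs
            have hs1 : 0 < 1 - s := by linarith [hs.2]
            simp only [Pi.zero_apply]; positivity

lemma aux_FR (p : ℝ) (hp : 1 < p) (r : ℝ) (h0 : 0 ≤ r) (h1 : r < 1) :
    ∫⁻ w in ball (0:ℂ) 1, ENNReal.ofReal (‖1 - r * w‖ ^ (-p) * (1 - ‖w‖ ^ 2) ^ (p - 2)) ≤
      ENNReal.ofReal ((2 * Real.pi) ^ p * 3 ^ |p - 2| * (2 / (p - 1)) *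
        (Real.log (1 / (1 - r)) + 1 / (p - 1))) := by
  have hp1 : 0 < p - 1 := by linarith
  have hm : Measurable (fun w : ℂ => ENNReal.ofReal (‖1 - r * w‖ ^ (-p) * (1 - ‖w‖ ^ 2) ^ (p - 2))) := by
    refine ENNReal.measurable_ofReal.comp ?_
    fun_prop
  rw [← lintegral_indicator measurableSet_ball, aux_polar _ (hm.indicator measurableSet_ball)]
  set K := (2 * Real.pi) ^ p * 3 ^ |p - 2| with hK
  have hK0 : 0 < K := by rw [hK]; positivity
  calc _ ≤ ∫⁻ s in Ioi (0:ℝ), (Ioo (0:ℝ) 1).indicator (fun s =>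
        ENNReal.ofReal (K * (2 / (p - 1))) *
          ENNReal.ofReal ((1 - s) ^ (p - 2) * (1 - r * s) ^ (1 - p))) s := by
        refine setLIntegral_mono' measurableSet_Ioi fun s hs => ?_
        have hs0 : 0 < s := hs
        rcases lt_or_ge s 1 with h | h
        · have hs1 : 0 < 1 - s := by linarith
          have hrs : r * s < 1 := by nlinarith
          have hrs0 : 0 ≤ r * s := by positivity
          rw [indicator_of_mem (show s ∈ Ioo (0:ℝ) 1 from ⟨hs0, h⟩)]
          calc _ ≤ ENNReal.ofReal s * ∫⁻ θ in Ioo (-Real.pi) Real.pi,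
                ENNReal.ofReal ((2 * Real.pi) ^ p * (3 ^ |p - 2| * (1 - s) ^ (p - 2))) *
                  ENNReal.ofReal ((1 - r * s + |θ|) ^ (-p)) := by
                refine mul_le_mul' le_rfl ?_
                refine setLIntegral_mono' measurableSet_Ioo fun θ hθ => ?_
                have e0 : ‖circleMap 0 s θ‖ = s := by simp [abs_of_pos hs0]
                rw [indicator_of_mem (by rw [mem_ball_zero_iff, e0]; exact h), e0,
                  ← ENNReal.ofReal_mul (by positivity)]
                apply ENNReal.ofReal_le_ofReal
                have e1 : (r:ℂ) * circleMap 0 s θ = circleMap 0 (r * s) θ := by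
                  simp [circleMap, mul_assoc]
                have hk := aux_kernel (r * s) θ hrs0 hrs hθ
                rw [e1]
                have hq : 0 < 1 - r * s + |θ| := by have := abs_nonneg θ; linarith
                have e2 : ‖1 - circleMap 0 (r * s) θ‖ ^ (-p) ≤
                    (2 * Real.pi) ^ p * (1 - r * s + |θ|) ^ (-p) := by
                  have : (2 * Real.pi) ^ p * (1 - r * s + |θ|) ^ (-p) =
                      ((2 * Real.pi)⁻¹ * (1 - r * s + |θ|)) ^ (-p) := by
                    rw [Real.mul_rpow (by positivity) hq.le, Real.inv_rpow (by positivity),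
                      Real.rpow_neg (by positivity : 0 ≤ 2 * Real.pi), inv_inv]
                  rw [this]
                  apply Real.rpow_le_rpow_of_nonpos (by positivity) _ (by linarith)
                  rw [inv_mul_le_iff₀ (by positivity)]
                  exact hk
                have e3 : (1 - s ^ 2) ^ (p - 2) ≤ 3 ^ |p - 2| * (1 - s) ^ (p - 2) :=
                  aux_ratio _ _ _ hs1 (by nlinarith) (by nlinarith)
                have hs2 : 0 ≤ 1 - s ^ 2 := by nlinarith
                calc _ ≤ ((2 * Real.pi) ^ p * (1 - r * s + |θ|) ^ (-p)) * (3 ^ |p - 2| * (1 - s) ^ (p - 2)) := by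
                      gcongr
                  _ = _ := by ring
            _ ≤ 1 * (ENNReal.ofReal ((2 * Real.pi) ^ p * (3 ^ |p - 2| * (1 - s) ^ (p - 2))) *
                  ENNReal.ofReal (2 / (p - 1) * (1 - r * s) ^ (1 - p))) := by
                rw [lintegral_const_mul _ (by fun_prop)]
                refine mul_le_mul' ?_ (mul_le_mul' le_rfl ?_)
                · simpa using h.le
                · exact aux_theta p hp _ (by linarith)
            _ = _ := by
                have : 0 < 1 - r * s := by linarith
                rw [one_mul, ← ENNReal.ofReal_mul (by positivity), ← ENNReal.ofReal_mul (by positivity)]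
                congr 1
                rw [hK]
                ring
        · have : ∀ θ, (ball (0:ℂ) 1).indicator (fun w : ℂ => ENNReal.ofReal (‖1 - r * w‖ ^ (-p) * (1 - ‖w‖ ^ 2) ^ (p - 2))) (circleMap 0 s θ) = 0 := by
            intro θ
            rw [indicator_of_notMem]
            simp [abs_of_pos hs0, h]
          simp_rw [this]
          simp
    _ = ∫⁻ s in Ioo (0:ℝ) 1, ENNReal.ofReal (K * (2 / (p - 1))) *
          ENNReal.ofReal ((1 - s) ^ (p - 2) * (1 - r * s) ^ (1 - p)) := by
        rw [lintegral_indicator measurableSet_Ioo, Measure.restrict_restrict measurableSet_Ioo,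
          inter_eq_left.2 Ioo_subset_Ioi_self]
    _ ≤ _ := by
        rw [lintegral_const_mul _ (by fun_prop),
          ENNReal.ofReal_mul (by positivity : 0 ≤ K * (2 / (p - 1)))]
        refine mul_le_mul' le_rfl ?_
        exact aux_s p hp r h0 h1

lemma aux_exists_unit (z : ℂ) : ∃ u : ℂ, ‖u‖ = 1 ∧ z = ‖z‖ * u := by
  refine ⟨Complex.exp (z.arg * Complex.I), Complex.norm_exp_ofReal_mul_I _, ?_⟩
  exact (Complex.norm_mul_exp_arg_mul_I z).symm

lemma aux_logs (r : ℝ) (h0 : 0 ≤ r) (h1 : r < 1) :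
    0 ≤ Real.log (1 / (1 - r)) ∧ Real.log (1 / (1 - r)) ≤ Real.log (2 / (1 - r ^ 2)) ∧
    Real.log 2 ≤ Real.log (2 / (1 - r ^ 2)) := by
  have hr1 : 0 < 1 - r := by linarith
  have hr2 : 0 < 1 - r ^ 2 := by nlinarith
  refine ⟨?_, ?_, ?_⟩
  · apply Real.log_nonneg
    rw [le_div_iff₀ hr1]; linarith
  · apply Real.log_le_log (by positivity)
    rw [div_le_div_iff₀ hr1 hr2]
    nlinarith
  · apply Real.log_le_log (by norm_num)
    rw [le_div_iff₀ hr2]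
    nlinarith [sq_nonneg r]

lemma aux_dirichlet_eq (p α : ℝ) (hp : 0 < p) (f : ℂ → ℂ) :
    dirichletLintegral p α f = ENNReal.ofReal (Real.pi)⁻¹ *
      ∫⁻ w in ball (0:ℂ) 1, ENNReal.ofReal ((1 - ‖w‖ ^ 2) ^ α) * ‖deriv f w‖ₑ ^ p := by
  unfold dirichletLintegral areaMeasure unitDisk
  rw [Measure.restrict_smul, lintegral_smul_measure, smul_eq_mul]
  congr 1
  refine lintegral_congr fun w => ?_
  rw [mul_comm, ENNReal.ofReal_mul' (by positivity), ← ENNReal.ofReal_rpow_of_nonneg (by positivity) hp.le,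
    ofReal_norm]

lemma aux_upper (p α : ℝ) (hα : -1 < α) (hpα : p = α + 2) :
    ∃ C : ℝ, 0 < C ∧ ∀ z ∈ unitDisk, ∀ f : ℂ → ℂ, MemDirichlet p α f → dirichletNorm p α f ≤ 1 →
      ‖f z‖ ≤ C * (Real.log (2 / (1 - ‖z‖ ^ 2))) ^ ((p - 1) / p) := by
  have hp : 1 < p := by linarith
  have hp0 : 0 < p := by linarith
  have hα2 : α = p - 2 := by linarith
  set K : ℝ := 16 / (3 * Real.pi) * 3 ^ |p - 3| with hK
  have hK0 : 0 < K := by rw [hK]; positivity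
  set e := (p - 1) / p with he
  have he0 : 0 < e := div_pos (by linarith) hp0
  have hl2 : 0 < Real.log 2 := Real.log_pos (by norm_num)
  refine ⟨(Real.log 2 ^ e)⁻¹ + (K * Real.pi) ^ (1 / p), by positivity, ?_⟩
  intro z hz f hf hn
  have hz1 : ‖z‖ < 1 := by simpa [unitDisk] using hz
  obtain ⟨hl0, hl1, hl3⟩ := aux_logs ‖z‖ (norm_nonneg z) hz1
  set L := Real.log (2 / (1 - ‖z‖ ^ 2)) with hL
  obtain ⟨hd, hfin⟩ := hf
  set D := dirichletLintegral p α f with hD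
  have hsum : ‖f 0‖ ^ p + D.toReal ≤ 1 := by
    unfold dirichletNorm at hn
    by_contra hcon
    push Not at hcon
    exact absurd hn (not_le.2 (Real.one_lt_rpow hcon (by positivity)))
  have hDn : 0 ≤ D.toReal := ENNReal.toReal_nonneg
  have hf0p : 0 ≤ ‖f 0‖ ^ p := by positivity
  have hf0 : ‖f 0‖ ≤ 1 := by
    by_contra hcon
    push Not at hcon
    linarith [Real.one_lt_rpow hcon hp0]
  have hD1 : D ≤ 1 := by
    rw [← ENNReal.ofReal_toReal hfin.ne]
    exact ENNReal.ofReal_le_one.2 (by linarith)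
  obtain ⟨u, hu, hzu⟩ := aux_exists_unit z
  have h1 := aux_radial p hp f hd u hu ‖z‖ (norm_nonneg z) hz1
  rw [← hzu] at h1
  have h2 := aux_carleson p hp (deriv f) (measurable_deriv f)
    (DifferentiableOn.deriv hd isOpen_ball) u hu
  have h3 : ∫⁻ w in ball (0:ℂ) 1, ENNReal.ofReal ((1 - ‖w‖ ^ 2) ^ (p - 2)) * ‖deriv f w‖ₑ ^ p
      = ENNReal.ofReal Real.pi * D := by
    rw [hD, aux_dirichlet_eq p α hp0, ← mul_assoc, ← ENNReal.ofReal_mul Real.pi_pos.le,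
      mul_inv_cancel₀ Real.pi_pos.ne', ENNReal.ofReal_one, one_mul, hα2]
  rw [h3, ← hK] at h2
  have h4 : ‖f z - f 0‖ₑ ≤ ENNReal.ofReal ((K * Real.pi) ^ (1 / p) * L ^ e) := by
    refine h1.trans ?_
    rw [ENNReal.ofReal_mul (by positivity), ← ENNReal.ofReal_rpow_of_nonneg (by positivity) (by positivity),
      ← ENNReal.ofReal_rpow_of_nonneg (by linarith) he0.le]
    refine mul_le_mul' (ENNReal.rpow_le_rpow ?_ (by positivity)) (ENNReal.rpow_le_rpow ?_ he0.le)
    · refine h2.trans ?_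
      rw [ENNReal.ofReal_mul hK0.le]
      gcongr
      exact mul_le_of_le_one_right' hD1
    · exact ENNReal.ofReal_le_ofReal hl1
  have hL0 : 0 < L := by linarith
  have h5 : ‖f z - f 0‖ ≤ (K * Real.pi) ^ (1 / p) * L ^ e := by
    rw [← ofReal_norm] at h4
    exact (ENNReal.ofReal_le_ofReal_iff (by positivity)).1 h4
  have h6 : 1 ≤ (Real.log 2 ^ e)⁻¹ * L ^ e := by
    rw [← div_eq_inv_mul, le_div_iff₀ (by positivity), one_mul]
    exact Real.rpow_le_rpow hl2.le hl3 he0.le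
  have h7 : ‖f z‖ ≤ ‖f z - f 0‖ + ‖f 0‖ := by
    simpa using norm_add_le (f z - f 0) (f 0)
  rw [add_mul]
  linarith

lemma aux_rot (h : ℂ → ℝ≥0∞) (v : ℂ) (hv : ‖v‖ = 1) :
    ∫⁻ w in ball (0:ℂ) 1, h (v * w) = ∫⁻ w in ball (0:ℂ) 1, h w := by
  let c : Circle := ⟨v, by simp [Submonoid.unitSphere, hv]⟩
  have hmp := (rotation c).measurePreserving
  rw [← lintegral_indicator measurableSet_ball, ← lintegral_indicator measurableSet_ball,
    ← hmp.lintegral_comp_emb (rotation c).toHomeomorph.measurableEmbedding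
      ((ball (0:ℂ) 1).indicator h)]
  refine lintegral_congr fun w => ?_
  have : rotation c w = v * w := rotation_apply c w
  rw [this]
  have hiff : v * w ∈ ball (0:ℂ) 1 ↔ w ∈ ball (0:ℂ) 1 := by simp [hv]
  by_cases hw : w ∈ ball (0:ℂ) 1
  · rw [indicator_of_mem hw, indicator_of_mem (hiff.2 hw)]
  · rw [indicator_of_notMem hw, indicator_of_notMem (fun h' => hw (hiff.1 h'))]

lemma aux_test (p α : ℝ) (hα : -1 < α) (hpα : p = α + 2) :
    ∃ c : ℝ, 0 < c ∧ ∀ z ∈ unitDisk, ∃ f : ℂ → ℂ, MemDirichlet p α f ∧ dirichletNorm p α f ≤ 1 ∧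
      c * (Real.log (2 / (1 - ‖z‖ ^ 2))) ^ ((p - 1) / p) = ‖f z‖ := by
  have hp : 1 < p := by linarith
  have hp0 : 0 < p := by linarith
  have hp1 : 0 < p - 1 := by linarith
  have hα2 : α = p - 2 := by linarith
  set K : ℝ := (2 * Real.pi) ^ p * 3 ^ |p - 2| * (2 / (p - 1)) with hK
  have hK0 : 0 < K := by rw [hK]; positivity
  have hl2 : 0 < Real.log 2 := Real.log_pos (by norm_num)
  set M : ℝ := Real.pi⁻¹ * (K * (1 + 1 / ((p - 1) * Real.log 2))) + Real.log 2 ^ (p - 1) with hM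
  have hM0 : 0 < M := by rw [hM]; positivity
  refine ⟨M ^ (-(1 / p)), by positivity, ?_⟩
  intro z hz
  have hz1 : ‖z‖ < 1 := by simpa [unitDisk] using hz
  have hz0 := norm_nonneg z
  obtain ⟨hl0, hl1, hl3⟩ := aux_logs ‖z‖ hz0 hz1
  have hz2 : 0 < 1 - ‖z‖ ^ 2 := by nlinarith
  set L := Real.log (2 / (1 - ‖z‖ ^ 2)) with hL
  have hL0 : 0 < L := by linarith
  obtain ⟨u, hu, hzu⟩ := aux_exists_unit z
  set r := ‖z‖ with hr
  set v := (starRingEnd ℂ) u with hv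
  have hv1 : ‖v‖ = 1 := by rw [hv, RCLike.norm_conj, hu]
  set k : ℝ := (M * L) ^ (-(1 / p)) with hk
  have hk0 : 0 < k := by rw [hk]; positivity
  have hkp : k ^ p = (M * L)⁻¹ := by
    rw [hk, ← Real.rpow_mul (by positivity)]
    rw [show -(1 / p) * p = -1 by field_simp, Real.rpow_neg_one]
  set f : ℂ → ℂ := fun w => (k : ℂ) * ((Real.log 2 : ℝ) - Complex.log (1 - r * (v * w))) with hf
  have hlt : ∀ w ∈ ball (0:ℂ) 1, ‖(r:ℂ) * (v * w)‖ < 1 := by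
    intro w hw
    have hw1 : ‖w‖ < 1 := by simpa using hw
    rw [norm_mul, norm_mul, hv1, one_mul, Complex.norm_real, Real.norm_eq_abs, abs_of_nonneg hz0]
    nlinarith [norm_nonneg w]
  have hder : ∀ w ∈ ball (0:ℂ) 1, HasDerivAt f (k * (r * v / (1 - r * (v * w)))) w := by
    intro w hw
    have hsl : 1 - (r:ℂ) * (v * w) ∈ Complex.slitPlane := by
      left
      have := (Complex.abs_re_le_norm _).trans_lt (hlt w hw)
      have := (abs_lt.1 this).2
      rw [Complex.sub_re, Complex.one_re]
      linarith
    have h1 : HasDerivAt (fun w : ℂ => 1 - (r:ℂ) * (v * w)) (-(r * v)) w := by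
      have := (((hasDerivAt_id w).const_mul v).const_mul (r:ℂ)).const_sub 1
      simpa using this
    have h2 := ((h1.clog hsl).const_sub ((Real.log 2 : ℝ) : ℂ)).const_mul (k:ℂ)
    rw [neg_div, neg_neg] at h2
    exact h2
  have hint : dirichletLintegral p α f ≤ ENNReal.ofReal
      (k ^ p * (Real.pi⁻¹ * (K * (Real.log (1 / (1 - r)) + 1 / (p - 1))))) := by
    rw [aux_dirichlet_eq p α hp0]
    calc _ ≤ ENNReal.ofReal Real.pi⁻¹ * ∫⁻ w in ball (0:ℂ) 1, ENNReal.ofReal (k ^ p) *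
          ENNReal.ofReal (‖1 - r * (v * w)‖ ^ (-p) * (1 - ‖v * w‖ ^ 2) ^ (p - 2)) := by
          refine mul_le_mul' le_rfl ?_
          refine setLIntegral_mono' measurableSet_ball fun w hw => ?_
          have hw1 : ‖w‖ < 1 := by simpa using hw
          have hw2 : 0 ≤ 1 - ‖w‖ ^ 2 := by nlinarith [norm_nonneg w]
          rw [(hder w hw).deriv, ← ofReal_norm, ENNReal.ofReal_rpow_of_nonneg (by positivity) hp0.le,
            ← ENNReal.ofReal_mul (by positivity), ← ENNReal.ofReal_mul (by positivity)]
          apply ENNReal.ofReal_le_ofReal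
          rw [norm_mul v w, hv1, one_mul, hα2]
          have e1 : ‖(k:ℂ) * (r * v / (1 - r * (v * w)))‖ ≤ k * ‖1 - r * (v * w)‖⁻¹ := by
            rw [norm_mul, norm_div, norm_mul, hv1, mul_one, Complex.norm_real, Complex.norm_real,
              Real.norm_eq_abs, Real.norm_eq_abs, abs_of_pos hk0, abs_of_nonneg hz0, div_eq_mul_inv]
            gcongr
            exact mul_le_of_le_one_left (by positivity) hz1.le
          have e2 := Real.rpow_le_rpow (norm_nonneg _) e1 hp0.le
          rw [Real.mul_rpow hk0.le (by positivity), Real.inv_rpow (by positivity),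
            ← Real.rpow_neg (by positivity)] at e2
          calc _ ≤ (1 - ‖w‖ ^ 2) ^ (p - 2) * (k ^ p * ‖1 - r * (v * w)‖ ^ (-p)) := by gcongr
            _ = _ := by ring
      _ = ENNReal.ofReal Real.pi⁻¹ * (ENNReal.ofReal (k ^ p) * ∫⁻ w in ball (0:ℂ) 1,
          ENNReal.ofReal (‖1 - r * w‖ ^ (-p) * (1 - ‖w‖ ^ 2) ^ (p - 2))) := by
          rw [lintegral_const_mul _ (by fun_prop), aux_rot (fun w =>
            ENNReal.ofReal (‖1 - r * w‖ ^ (-p) * (1 - ‖w‖ ^ 2) ^ (p - 2))) v hv1]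
      _ ≤ ENNReal.ofReal Real.pi⁻¹ * (ENNReal.ofReal (k ^ p) *
            ENNReal.ofReal (K * (Real.log (1 / (1 - r)) + 1 / (p - 1)))) := by
          gcongr
          exact aux_FR p hp r hz0 hz1
      _ = _ := by
          rw [← ENNReal.ofReal_mul (by positivity), ← ENNReal.ofReal_mul (by positivity)]
          congr 1
          ring
  have hf0 : ‖f 0‖ = k * Real.log 2 := by
    simp only [hf, mul_zero, sub_zero, Complex.log_one]
    rw [norm_mul, Complex.norm_real, Complex.norm_real, Real.norm_eq_abs, Real.norm_eq_abs,
      abs_of_pos hk0, abs_of_pos hl2]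
  have hfz : ‖f z‖ = k * L := by
    have e1 : (r:ℂ) * (v * z) = ((r ^ 2 : ℝ) : ℂ) := by
      have : v * u = 1 := by
        rw [hv, mul_comm, Complex.mul_conj, Complex.normSq_eq_norm_sq, hu]; simp
      conv_lhs => rw [hzu]
      rw [show (r:ℂ) * (v * (r * u)) = r * r * (v * u) by ring, this]
      push_cast; ring
    simp only [hf]
    rw [e1, ← Complex.ofReal_one, ← Complex.ofReal_sub, ← Complex.ofReal_log hz2.le,
      ← Complex.ofReal_sub, ← Real.log_div (by norm_num) hz2.ne', ← hL]
    rw [norm_mul, Complex.norm_real, Complex.norm_real, Real.norm_eq_abs, Real.norm_eq_abs,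
      abs_of_pos hk0, abs_of_pos hL0]
  refine ⟨f, ⟨fun w hw => (hder w hw).differentiableAt.differentiableWithinAt,
    hint.trans_lt ENNReal.ofReal_lt_top⟩, ?_, ?_⟩
  · unfold dirichletNorm
    apply Real.rpow_le_one (by positivity) _ (by positivity)
    have h1 : (dirichletLintegral p α f).toReal ≤
        k ^ p * (Real.pi⁻¹ * (K * (Real.log (1 / (1 - r)) + 1 / (p - 1)))) :=
      ENNReal.toReal_le_of_le_ofReal (by positivity) hint
    have h2 : Real.log (1 / (1 - r)) + 1 / (p - 1) ≤ (1 + 1 / ((p - 1) * Real.log 2)) * L := by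
      have : 1 / (p - 1) ≤ 1 / ((p - 1) * Real.log 2) * L := by
        calc 1 / (p - 1) = 1 / ((p - 1) * Real.log 2) * Real.log 2 := by field_simp
          _ ≤ _ := by gcongr
      linarith
    have h3 : Real.log 2 ^ p ≤ Real.log 2 ^ (p - 1) * L := by
      calc Real.log 2 ^ p = Real.log 2 ^ (p - 1) * Real.log 2 := by
            conv_lhs => rw [show p = (p - 1) + 1 by ring]
            rw [Real.rpow_add hl2, Real.rpow_one]
        _ ≤ _ := by gcongr
    calc ‖f 0‖ ^ p + (dirichletLintegral p α f).toReal
        ≤ k ^ p * (Real.log 2 ^ (p - 1) * L) +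
          k ^ p * (Real.pi⁻¹ * (K * ((1 + 1 / ((p - 1) * Real.log 2)) * L))) := by
          rw [hf0, Real.mul_rpow hk0.le hl2.le]
          refine add_le_add (by gcongr) (h1.trans ?_)
          gcongr
      _ = k ^ p * (M * L) := by rw [hM]; ring
      _ = 1 := by rw [hkp]; exact inv_mul_cancel₀ (by positivity)
  · rw [hfz, hk, Real.mul_rpow hM0.le hL0.le, mul_assoc]
    congr 1
    conv_rhs => rw [← Real.rpow_one L, ← Real.rpow_mul hL0.le, one_mul, ← Real.rpow_add hL0]
    congr 1
    field_simp
    ring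

/-- Lemma 2.1(2): for `p = α + 2`, the point evaluation functional on `D^p_α` satisfies
`‖δ_z‖ ≍ (log(2/(1-|z|²)))^{(p-1)/p}`. -/
theorem pointEval_dirichlet_critical (p α : ℝ) (hα : -1 < α) (hp : 0 < p)
    (hpα : p = α + 2) :
    ∃ c C : ℝ, 0 < c ∧ 0 < C ∧ ∀ z ∈ unitDisk,
      c * (Real.log (2 / (1 - ‖z‖ ^ 2))) ^ ((p - 1) / p) ≤
        sSup {r : ℝ | ∃ f : ℂ → ℂ, MemDirichlet p α f ∧ dirichletNorm p α f ≤ 1 ∧ r = ‖f z‖} ∧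
      sSup {r : ℝ | ∃ f : ℂ → ℂ, MemDirichlet p α f ∧ dirichletNorm p α f ≤ 1 ∧ r = ‖f z‖} ≤
        C * (Real.log (2 / (1 - ‖z‖ ^ 2))) ^ ((p - 1) / p) := by
  obtain ⟨C, hC, hup⟩ := aux_upper p α hα hpα
  obtain ⟨c, hc, hlo⟩ := aux_test p α hα hpα
  refine ⟨c, C, hc, hC, fun z hz => ?_⟩
  have hb : ∀ r ∈ {r : ℝ | ∃ f : ℂ → ℂ, MemDirichlet p α f ∧ dirichletNorm p α f ≤ 1 ∧ r = ‖f z‖},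
      r ≤ C * (Real.log (2 / (1 - ‖z‖ ^ 2))) ^ ((p - 1) / p) := by
    rintro r ⟨f, h1, h2, rfl⟩
    exact hup z hz f h1 h2
  obtain ⟨f, h1, h2, h3⟩ := hlo z hz
  exact ⟨le_csSup ⟨_, hb⟩ ⟨f, h1, h2, h3⟩, csSup_le ⟨_, f, h1, h2, rfl⟩ hb⟩
end
end

section
/- Let α > -1 and 0 < p < α + 2. For z ∈ 𝔻 define F_z(ω) = (1-|z|²)^{(α+2)/p} / (1-z̄ω)^{2(α+2)/p-1} - (1-|z|²)^{(α+2)/p+1} / (1-z̄ω)^{2(α+2)/p} for ω ∈ 𝔻. Then there is a constant C > 0 independent of z such that ‖F_z‖_{D^p_α} ≤ C for all z ∈ 𝔻, and moreover F_z(z) = 0 and F'_z(z) = -z̄ / (1-|z|²)^{(α+2)/p}. -/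
open MeasureTheory Metric Set Filter Topology ENNReal

noncomputable section

/-- The test function
`F_z(ω) = (1-|z|²)^{(α+2)/p}/(1-z̄ω)^{2(α+2)/p-1} - (1-|z|²)^{(α+2)/p+1}/(1-z̄ω)^{2(α+2)/p}`. -/
def testFnF (p α : ℝ) (z : ℂ) : ℂ → ℂ := fun ω =>
  (((1 - ‖z‖ ^ 2) ^ ((α + 2) / p) : ℝ) : ℂ) /
      (1 - (starRingEnd ℂ) z * ω) ^ ((2 * (α + 2) / p - 1 : ℝ) : ℂ) -
    (((1 - ‖z‖ ^ 2) ^ ((α + 2) / p + 1) : ℝ) : ℂ) /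
      (1 - (starRingEnd ℂ) z * ω) ^ ((2 * (α + 2) / p : ℝ) : ℂ)


lemma aux_A_pos {z : ℂ} (hz : z ∈ unitDisk) : 0 < 1 - ‖z‖ ^ 2 := by
  have h : ‖z‖ < 1 := by simpa [unitDisk] using hz
  nlinarith [norm_nonneg z]

lemma aux_u_lower {z w : ℂ} (hz : z ∈ unitDisk) (hw : w ∈ unitDisk) :
    (1 - ‖z‖ ^ 2) / 2 ≤ ‖1 - (starRingEnd ℂ) z * w‖ := by
  have h : ‖z‖ < 1 := by simpa [unitDisk] using hz
  have h' : ‖w‖ < 1 := by simpa [unitDisk] using hw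
  have h1 := norm_sub_norm_le (1 : ℂ) ((starRingEnd ℂ) z * w)
  rw [norm_mul, RCLike.norm_conj, norm_one] at h1
  nlinarith [norm_nonneg z, norm_nonneg w, mul_nonneg (norm_nonneg z) (sub_nonneg.2 h'.le),
    sq_nonneg (1 - ‖z‖)]

lemma aux_u_slit {z w : ℂ} (hz : z ∈ unitDisk) (hw : w ∈ unitDisk) :
    1 - (starRingEnd ℂ) z * w ∈ Complex.slitPlane := by
  have h : ‖z‖ < 1 := by simpa [unitDisk] using hz
  have h' : ‖w‖ < 1 := by simpa [unitDisk] using hw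
  left
  have h1 := Complex.re_le_norm ((starRingEnd ℂ) z * w)
  rw [norm_mul, RCLike.norm_conj] at h1
  simp only [Complex.sub_re, Complex.one_re]
  nlinarith [norm_nonneg z, norm_nonneg w]

lemma aux_hasDeriv (p α s : ℝ) (hs : s = (α + 2) / p) {z w : ℂ} (hz : z ∈ unitDisk)
    (hw : w ∈ unitDisk) :
    HasDerivAt (testFnF p α z)
      ((starRingEnd ℂ) z * (((2 * s - 1) * (1 - ‖z‖ ^ 2) ^ s : ℝ) *
          (1 - (starRingEnd ℂ) z * w) ^ ((-(2 * s) : ℝ) : ℂ) -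
        (2 * s * (1 - ‖z‖ ^ 2) ^ (s + 1) : ℝ) *
          (1 - (starRingEnd ℂ) z * w) ^ ((-(2 * s) - 1 : ℝ) : ℂ))) w := by
  have hu : HasDerivAt (fun w : ℂ => 1 - (starRingEnd ℂ) z * w) (-(starRingEnd ℂ) z) w := by
    simpa using ((hasDerivAt_id w).const_mul ((starRingEnd ℂ) z)).const_sub 1
  have h1 := hu.cpow_const (c := ((-(2 * s - 1) : ℝ) : ℂ)) (aux_u_slit hz hw)
  have h2 := hu.cpow_const (c := ((-(2 * s) : ℝ) : ℂ)) (aux_u_slit hz hw)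
  have h3 := (h1.const_mul (((1 - ‖z‖ ^ 2) ^ s : ℝ) : ℂ)).sub
    (h2.const_mul (((1 - ‖z‖ ^ 2) ^ (s + 1) : ℝ) : ℂ))
  have e : 2 * (α + 2) / p = 2 * s := by rw [hs]; ring
  have hfun : testFnF p α z = (fun w : ℂ => (((1 - ‖z‖ ^ 2) ^ s : ℝ) : ℂ) *
      (1 - (starRingEnd ℂ) z * w) ^ ((-(2 * s - 1) : ℝ) : ℂ)) - (fun w : ℂ =>
      (((1 - ‖z‖ ^ 2) ^ (s + 1) : ℝ) : ℂ) *
      (1 - (starRingEnd ℂ) z * w) ^ ((-(2 * s) : ℝ) : ℂ)) := by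
    funext x
    simp only [testFnF, Pi.sub_apply, e, ← hs]
    rw [Complex.ofReal_neg, Complex.ofReal_neg, Complex.cpow_neg, Complex.cpow_neg]
    simp only [div_eq_mul_inv]
  rw [hfun]
  convert! h3 using 1
  have e1 : ((-(2 * s - 1) : ℝ) : ℂ) - 1 = ((-(2 * s) : ℝ) : ℂ) := by push_cast; ring
  have e2 : ((-(2 * s) : ℝ) : ℂ) - 1 = ((-(2 * s) - 1 : ℝ) : ℂ) := by push_cast; ring
  rw [e1, e2]
  push_cast
  ring

lemma aux_deriv_bound (p α s : ℝ) (hs : s = (α + 2) / p) (hs1 : 1 < s) {z w : ℂ}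
    (hz : z ∈ unitDisk) (hw : w ∈ unitDisk) :
    ‖deriv (testFnF p α z) w‖ ≤ (6 * s) * ((1 - ‖z‖ ^ 2) ^ s *
      ‖1 - (starRingEnd ℂ) z * w‖ ^ (-(2 * s))) := by
  rw [(aux_hasDeriv p α s hs hz hw).deriv]
  have hA := aux_A_pos hz
  have hu := aux_u_lower hz hw
  have hu0 : 0 < ‖1 - (starRingEnd ℂ) z * w‖ := by linarith
  have h : ‖z‖ < 1 := by simpa [unitDisk] using hz
  set A := 1 - ‖z‖ ^ 2 with hAdef
  set u := 1 - (starRingEnd ℂ) z * w with hudef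
  have hAs : 0 < A ^ s := Real.rpow_pos_of_pos hA _
  have hus : 0 < ‖u‖ ^ (-(2 * s)) := Real.rpow_pos_of_pos hu0 _
  rw [norm_mul, RCLike.norm_conj]
  have key : ‖(((2 * s - 1) * A ^ s : ℝ) : ℂ) * u ^ ((-(2 * s) : ℝ) : ℂ) -
        ((2 * s * A ^ (s + 1) : ℝ) : ℂ) * u ^ ((-(2 * s) - 1 : ℝ) : ℂ)‖ ≤
      (6 * s) * (A ^ s * ‖u‖ ^ (-(2 * s))) := by
    refine (norm_sub_le _ _).trans ?_
    rw [norm_mul, norm_mul, Complex.norm_cpow_real, Complex.norm_cpow_real, Complex.norm_real,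
      Complex.norm_real, Real.norm_of_nonneg (by apply mul_nonneg <;> linarith),
      Real.norm_of_nonneg (by positivity), Real.rpow_add hA, Real.rpow_one,
      Real.rpow_sub hu0, Real.rpow_one]
    have h2 : A / ‖u‖ ≤ 2 := by rw [div_le_iff₀ hu0]; linarith
    have h3 : 0 < A ^ s * ‖u‖ ^ (-(2 * s)) := by positivity
    have h4 : 2 * s * (A ^ s * A) * (‖u‖ ^ (-(2 * s)) / ‖u‖) =
      2 * s * (A ^ s * ‖u‖ ^ (-(2 * s))) * (A / ‖u‖) := by ring
    rw [h4]
    have h5 : 2 * s * (A ^ s * ‖u‖ ^ (-(2 * s))) * (A / ‖u‖) ≤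
      2 * s * (A ^ s * ‖u‖ ^ (-(2 * s))) * 2 := by gcongr
    nlinarith
  calc _ ≤ 1 * _ := mul_le_mul h.le key (norm_nonneg _) zero_le_one
    _ = _ := one_mul _

lemma aux_integrable (α : ℝ) (hα : -1 < α) :
    ∫⁻ w in unitDisk, ENNReal.ofReal ((1 - ‖w‖ ^ 2) ^ α) < ⊤ := by
  have h1 : IntegrableOn (fun y : ℝ => y * (1 - y ^ 2) ^ α) (Ioc 0 1) := by
    refine intervalIntegral.integrableOn_deriv_of_nonneg
      (g := fun y : ℝ => -(1 - y ^ 2) ^ (α + 1) / (2 * (α + 1))) ?_ ?_ ?_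
    · refine ContinuousOn.div_const (ContinuousOn.neg ?_) _
      exact ContinuousOn.rpow_const (by fun_prop) (fun x _ => Or.inr (by linarith))
    · intro x hx
      have hpos : 0 < 1 - x ^ 2 := by nlinarith [hx.1, hx.2]
      have hd : HasDerivAt (fun y : ℝ => 1 - y ^ 2) (-(2 * x)) x := by
        simpa using (hasDerivAt_pow 2 x).const_sub 1
      have := ((hd.rpow_const (p := α + 1) (Or.inl hpos.ne')).neg).div_const (2 * (α + 1))
      convert! this using 1
      have : α + 1 ≠ 0 := by linarith
      rw [add_sub_cancel_right]
      field_simp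
    · intro x hx
      have hpos : 0 < 1 - x ^ 2 := by nlinarith [hx.1, hx.2]
      have := hx.1
      positivity
  have h2 : IntegrableOn (fun w : ℂ => (1 - ‖w‖ ^ 2) ^ α) (ball 0 1) volume := by
    rw [integrableOn_fun_norm_addHaar volume (f := fun y : ℝ => (1 - y ^ 2) ^ α)]
    simp only [Complex.finrank_real_complex, smul_eq_mul]
    simpa using h1.mono_set Ioo_subset_Ioc_self
  have h3 := h2.2
  refine lt_of_le_of_lt (lintegral_mono fun w => ?_) h3
  exact Real.ofReal_le_enorm _

lemma aux_mobius {z w : ℂ} (hu : 1 - (starRingEnd ℂ) z * w ≠ 0) :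
    1 - ‖(z - w) / (1 - (starRingEnd ℂ) z * w)‖ ^ 2 =
      (1 - ‖z‖ ^ 2) * (1 - ‖w‖ ^ 2) / ‖1 - (starRingEnd ℂ) z * w‖ ^ 2 := by
  have : ‖1 - (starRingEnd ℂ) z * w‖ ≠ 0 := norm_ne_zero_iff.2 hu
  rw [norm_div, div_pow]
  have e : ‖1 - (starRingEnd ℂ) z * w‖ ^ 2 - ‖z - w‖ ^ 2 = (1 - ‖z‖ ^ 2) * (1 - ‖w‖ ^ 2) := by
    simp only [← Complex.normSq_eq_norm_sq, Complex.normSq_apply]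
    simp
    ring
  rw [← e, sub_div, div_self (pow_ne_zero 2 this)]

lemma aux_change (α : ℝ) {z : ℂ} (hz : z ∈ unitDisk) :
    ∫⁻ w in unitDisk, ENNReal.ofReal ((1 - ‖z‖ ^ 2) ^ (α + 2) *
      ‖1 - (starRingEnd ℂ) z * w‖ ^ (-(2 * (α + 2))) * (1 - ‖w‖ ^ 2) ^ α) ≤
    ∫⁻ w in unitDisk, ENNReal.ofReal ((1 - ‖w‖ ^ 2) ^ α) := by
  have hA := aux_A_pos hz
  have hne : ∀ w ∈ unitDisk, 1 - (starRingEnd ℂ) z * w ≠ 0 := fun w hw =>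
    Complex.slitPlane_ne_zero (aux_u_slit hz hw)
  have hzz : (starRingEnd ℂ) z * z = ((‖z‖ ^ 2 : ℝ) : ℂ) := by
    rw [mul_comm, Complex.mul_conj, Complex.normSq_eq_norm_sq]
  have hA' : ((1 - ‖z‖ ^ 2 : ℝ) : ℂ) ≠ 0 := Complex.ofReal_ne_zero.2 hA.ne'
  let φ : ℂ → ℂ := fun w => (z - w) / (1 - (starRingEnd ℂ) z * w)
  let d : ℂ → ℂ := fun w => -((1 - ‖z‖ ^ 2 : ℝ) : ℂ) / (1 - (starRingEnd ℂ) z * w) ^ 2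
  have hd : ∀ w ∈ unitDisk, HasDerivAt φ (d w) w := by
    intro w hw
    have hu : HasDerivAt (fun w : ℂ => 1 - (starRingEnd ℂ) z * w) (-(starRingEnd ℂ) z) w := by
      simpa using ((hasDerivAt_id w).const_mul ((starRingEnd ℂ) z)).const_sub 1
    have hv : HasDerivAt (fun w : ℂ => z - w) (-1) w := by
      simpa using (hasDerivAt_id w).const_sub z
    convert! hv.div hu (hne w hw) using 1
    simp only [d]
    congr 1
    rw [Complex.ofReal_sub, ← hzz]
    push_cast
    ring
  have hinj : InjOn φ unitDisk := by
    intro w hw w' hw' h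
    simp only [φ] at h
    rw [div_eq_div_iff (hne w hw) (hne w' hw')] at h
    have : ((1 - ‖z‖ ^ 2 : ℝ) : ℂ) * (w - w') = 0 := by
      rw [Complex.ofReal_sub, ← hzz]
      push_cast
      linear_combination -h
    exact sub_eq_zero.1 ((mul_eq_zero.1 this).resolve_left hA')
  have himg : φ '' unitDisk ⊆ unitDisk := by
    rintro _ ⟨w, hw, rfl⟩
    have h := aux_mobius (hne w hw)
    have hB := aux_A_pos hw
    have hn : 0 < ‖1 - (starRingEnd ℂ) z * w‖ := norm_pos_iff.2 (hne w hw)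
    have : 0 < 1 - ‖φ w‖ ^ 2 := by
      simp only [φ]; rw [h]; positivity
    simp only [unitDisk, mem_ball_zero_iff]
    nlinarith [norm_nonneg (φ w)]
  have hcov := lintegral_image_eq_lintegral_abs_det_fderiv_mul volume
    (s := unitDisk) (f := φ)
    (f' := fun w => (ContinuousLinearMap.toSpanSingleton ℂ (d w)).restrictScalars ℝ)
    measurableSet_ball
    (fun w hw => ((hd w hw).hasFDerivAt.restrictScalars ℝ).hasFDerivWithinAt) hinj
    (fun w => ENNReal.ofReal ((1 - ‖w‖ ^ 2) ^ α))
  calc _ = _ := ?_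
    _ = _ := hcov.symm
    _ ≤ _ := lintegral_mono_set himg
  refine setLIntegral_congr_fun measurableSet_ball ?_
  intro w hw
  have hw : w ∈ unitDisk := hw
  have hn : 0 < ‖1 - (starRingEnd ℂ) z * w‖ := norm_pos_iff.2 (hne w hw)
  have hB := aux_A_pos hw
  have hdet : |((ContinuousLinearMap.toSpanSingleton ℂ (d w)).restrictScalars ℝ).det| =
      ‖d w‖ ^ 2 := by
    simp [ContinuousLinearMap.det, LinearMap.det_restrictScalars,
      Algebra.norm_complex_eq, Complex.normSq_eq_norm_sq]
  simp only []
  rw [hdet, ← ENNReal.ofReal_mul (by positivity)]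
  congr 1
  simp only [φ, d]
  rw [aux_mobius (hne w hw), norm_div, norm_neg, Complex.norm_real, Real.norm_of_nonneg hA.le,
    norm_pow, Real.div_rpow (by positivity) (by positivity), Real.mul_rpow hA.le hB.le,
    ← Real.rpow_natCast_mul hn.le, Real.rpow_neg hn.le, Real.rpow_add hA, mul_add,
    Real.rpow_add hn]
  have e1 : (1 - ‖z‖ ^ 2) ^ (2 : ℝ) = (1 - ‖z‖ ^ 2) ^ 2 := by exact_mod_cast Real.rpow_natCast _ 2
  have e2 : ‖1 - (starRingEnd ℂ) z * w‖ ^ (2 * 2 : ℝ) = ‖1 - (starRingEnd ℂ) z * w‖ ^ 4 := by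
    norm_num
  rw [e1, e2]
  push_cast
  have : ‖1 - (starRingEnd ℂ) z * w‖ ^ (2 * α) ≠ 0 := (Real.rpow_pos_of_pos hn _).ne'
  field_simp

lemma aux_dirichlet (p α s : ℝ) (hp : 0 < p) (hs : s = (α + 2) / p) (hs1 : 1 < s) {z : ℂ}
    (hz : z ∈ unitDisk) :
    dirichletLintegral p α (testFnF p α z) ≤ ENNReal.ofReal (Real.pi)⁻¹ *
      (ENNReal.ofReal ((6 * s) ^ p) *
        ∫⁻ w in unitDisk, ENNReal.ofReal ((1 - ‖w‖ ^ 2) ^ α)) := by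
  unfold dirichletLintegral areaMeasure
  rw [Measure.restrict_smul, lintegral_smul_measure, smul_eq_mul]
  gcongr
  refine le_trans ?_ (mul_le_mul_right (aux_change α hz) _)
  rw [← lintegral_const_mul' _ _ ENNReal.ofReal_ne_top]
  refine setLIntegral_mono' measurableSet_ball ?_
  intro w hw
  have hw : w ∈ unitDisk := hw
  have hA := aux_A_pos hz
  have hB := aux_A_pos hw
  have h6 : 0 ≤ 6 * s := by linarith
  rw [← ENNReal.ofReal_mul (by positivity)]
  apply ENNReal.ofReal_le_ofReal
  rw [← mul_assoc]
  refine mul_le_mul_of_nonneg_right ?_ (by positivity)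
  have h := Real.rpow_le_rpow (norm_nonneg _) (aux_deriv_bound p α s hs hs1 hz hw) hp.le
  have e : s * p = α + 2 := by rw [hs]; field_simp
  have e2 : -(2 * s) * p = -(2 * (α + 2)) := by rw [← e]; ring
  rwa [Real.mul_rpow h6 (by positivity),
    Real.mul_rpow (x := (1 - ‖z‖ ^ 2) ^ s) (by positivity) (by positivity),
    ← Real.rpow_mul hA.le, ← Real.rpow_mul (norm_nonneg _), e, e2] at h

/-- The test functions `F_z` have uniformly bounded `D^p_α` norm, with `F_z(z) = 0` and
`F'_z(z) = -z̄ (1-|z|²)^{-(α+2)/p}`. -/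
theorem testFnF_dirichlet_bounded (p α : ℝ) (hα : -1 < α) (hp : 0 < p) (hpα : p < α + 2) :
    ∃ C : ℝ, 0 < C ∧ ∀ z ∈ unitDisk,
      MemDirichlet p α (testFnF p α z) ∧
      dirichletNorm p α (testFnF p α z) ≤ C ∧
      testFnF p α z z = 0 ∧
      deriv (testFnF p α z) z =
        -(starRingEnd ℂ) z * ((1 / (1 - ‖z‖ ^ 2) ^ ((α + 2) / p) : ℝ) : ℂ) := by
  obtain ⟨s, hs⟩ : ∃ s : ℝ, s = (α + 2) / p := ⟨_, rfl⟩
  have hs1 : 1 < s := by rw [hs, one_lt_div hp]; exact hpα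
  set M : ℝ≥0∞ := ENNReal.ofReal (Real.pi)⁻¹ *
      (ENNReal.ofReal ((6 * s) ^ p) *
        ∫⁻ w in unitDisk, ENNReal.ofReal ((1 - ‖w‖ ^ 2) ^ α)) with hM
  have hMtop : M < ⊤ := ENNReal.mul_lt_top ENNReal.ofReal_lt_top
    (ENNReal.mul_lt_top ENNReal.ofReal_lt_top (aux_integrable α hα))
  refine ⟨(1 + M.toReal) ^ (1 / p), Real.rpow_pos_of_pos (by positivity) _, ?_⟩
  intro z hz
  have hA := aux_A_pos hz
  have hD := aux_dirichlet p α s hp hs hs1 hz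
  rw [← hM] at hD
  have hu : 1 - (starRingEnd ℂ) z * z = ((1 - ‖z‖ ^ 2 : ℝ) : ℂ) := by
    rw [mul_comm, Complex.mul_conj, Complex.normSq_eq_norm_sq]; push_cast; ring
  have e : 2 * (α + 2) / p = 2 * s := by rw [hs]; ring
  refine ⟨⟨fun w hw => (aux_hasDeriv p α s hs hz hw).differentiableAt.differentiableWithinAt,
    hD.trans_lt hMtop⟩, ?_, ?_, ?_⟩
  · unfold dirichletNorm
    refine Real.rpow_le_rpow (by positivity) ?_ (by positivity)
    refine add_le_add ?_ (ENNReal.toReal_mono hMtop.ne hD)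
    refine Real.rpow_le_one (norm_nonneg _) ?_ hp.le
    have hA1 : 1 - ‖z‖ ^ 2 ≤ 1 := by nlinarith [norm_nonneg z]
    simp only [testFnF, mul_zero, sub_zero, Complex.one_cpow, div_one, ← hs]
    rw [← Complex.ofReal_sub, Complex.norm_real, Real.norm_eq_abs, abs_le]
    have h1 := Real.rpow_le_one hA.le hA1 (by linarith : 0 ≤ s)
    have h2 := Real.rpow_le_one hA.le hA1 (by linarith : 0 ≤ s + 1)
    have h3 := Real.rpow_nonneg hA.le s
    have h4 := Real.rpow_nonneg hA.le (s + 1)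
    constructor <;> linarith
  · simp only [testFnF, hu, e, ← hs]
    rw [← Complex.ofReal_cpow hA.le, ← Complex.ofReal_cpow hA.le, ← Complex.ofReal_div,
      ← Complex.ofReal_div, ← Real.rpow_sub hA, ← Real.rpow_sub hA]
    rw [show s - (2 * s - 1) = s + 1 - 2 * s by ring, sub_self]
  · rw [(aux_hasDeriv p α s hs hz hz).deriv, hu, ← Complex.ofReal_cpow hA.le,
      ← Complex.ofReal_cpow hA.le, ← Complex.ofReal_mul, ← Complex.ofReal_mul,
      ← Complex.ofReal_sub, ← hs, neg_mul_comm, ← Complex.ofReal_neg]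
    congr 2
    rw [mul_assoc, mul_assoc, ← Real.rpow_add hA, ← Real.rpow_add hA, one_div,
      ← Real.rpow_neg hA.le, show s + 1 + (-(2 * s) - 1) = -s by ring,
      show s + -(2 * s) = -s by ring]
    ring
end
end
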